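/- arXiv:1308.2948 — 5 statements merged into one kernel-verified Lean document; each statement's English description precedes it below -/
import Mathlib

section
/- Let b > a > 0. If f is twice differentiable on [0,b], |f''| is integrable on [0,b], and |f''| is convex on [0,b], then |(f(a)+f(b))/2 − (1/(b−a))·∫_a^b f(x) dx| ≤ ((b−a)²/24)·(|f''(a)| + |f''(b)|). -/
/-!
Let `L` be the affine function with `L a = |f'' a|`, `L b = |f'' b|`. Convexity of `|f''|` gives
`|f''| ≤ L` on `[a, b]`. If `G` is a cubic with `G'' = L`, then both `G + f` and `G - f` are convex
on `[a, b]`, so the right Hermite-Hadamard inequality (`hermite_hadamard_right`: the mean of a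
convex function is at most the average of its endpoint values) applies to each. Together they bound
the trapezoid error of `f` in absolute value by that of `G`, which is
`(b - a)² / 24 * (|f'' a| + |f'' b|)`.
-/

open MeasureTheory Real Set

theorem hermite_hadamard_right {a b : ℝ} (hab : a < b) {h : ℝ → ℝ}
    (hc : ContinuousOn h (Icc a b)) (hconv : ConvexOn ℝ (Icc a b) h) :
    ∫ x in a..b, h x ≤ (b - a) * ((h a + h b) / 2) := by
  have hba : 0 < b - a := sub_pos.2 hab
  have hchord : ∀ x ∈ Icc a b, h x ≤ h a + (x - a) * ((h b - h a) / (b - a)) := by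
    intro x hx
    have key := hconv.2 (left_mem_Icc.2 hab.le) (right_mem_Icc.2 hab.le)
      (div_nonneg (sub_nonneg.2 hx.2) hba.le) (div_nonneg (sub_nonneg.2 hx.1) hba.le)
      (by field_simp; ring)
    simp only [smul_eq_mul] at key
    have e : (b - x) / (b - a) * a + (x - a) / (b - a) * b = x := by field_simp; ring
    rw [e] at key
    refine key.trans_eq ?_
    field_simp
    ring
  have hmono := intervalIntegral.integral_mono_on (μ := volume) hab.le
    (hc.intervalIntegrable_of_Icc hab.le)
    ((by fun_prop : Continuous fun x : ℝ =>
      h a + (x - a) * ((h b - h a) / (b - a))).intervalIntegrable a b) hchord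
  refine hmono.trans_eq ?_
  have hF : ∀ x ∈ uIcc a b, HasDerivAt
      (fun x : ℝ => h a * x + (x - a) ^ 2 / 2 * ((h b - h a) / (b - a)))
      (h a + (x - a) * ((h b - h a) / (b - a))) x := by
    intro x _
    have := ((hasDerivAt_id x).const_mul (h a)).add
      (((((hasDerivAt_id x).sub_const a).pow 2).div_const 2).mul_const ((h b - h a) / (b - a)))
    refine HasDerivAt.congr_deriv this ?_
    simp
  rw [intervalIntegral.integral_eq_sub_of_hasDerivAt hF
    ((by fun_prop : Continuous fun x : ℝ =>
      h a + (x - a) * ((h b - h a) / (b - a))).intervalIntegrable a b)]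
  field_simp
  ring

/-- One side of the trapezoid error bound; applied to `f` and to `-f`. -/
theorem trapezoid_one_sided {a b A B : ℝ} (hab : a < b) {f f' f'' : ℝ → ℝ}
    (hc : ContinuousOn f (Icc a b))
    (hf' : ∀ x ∈ Ioo a b, HasDerivAt f (f' x) x)
    (hf'' : ∀ x ∈ Ioo a b, HasDerivAt f' (f'' x) x)
    (hbd : ∀ x ∈ Ioo a b, -f'' x ≤ (A * (b - x) + B * (x - a)) / (b - a)) :
    (1 / (b - a)) * (∫ x in a..b, f x) - (f a + f b) / 2 ≤ (b - a) ^ 2 / 24 * (A + B) := by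
  have hba : 0 < b - a := sub_pos.2 hab
  set G : ℝ → ℝ := fun x => (A * (b - x) ^ 3 + B * (x - a) ^ 3) / (6 * (b - a)) with hG
  have hGc : Continuous G := by fun_prop
  have hG' : ∀ x, HasDerivAt G ((-A * (b - x) ^ 2 + B * (x - a) ^ 2) / (2 * (b - a))) x := by
    intro x
    have := (((((hasDerivAt_id x).const_sub b).pow 3).const_mul A).add
      ((((hasDerivAt_id x).sub_const a).pow 3).const_mul B)).div_const (6 * (b - a))
    refine HasDerivAt.congr_deriv this ?_
    simp
    field_simp
    ring
  have hG'' : ∀ x, HasDerivAt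
      (fun x => (-A * (b - x) ^ 2 + B * (x - a) ^ 2) / (2 * (b - a)))
      ((A * (b - x) + B * (x - a)) / (b - a)) x := by
    intro x
    have := (((((hasDerivAt_id x).const_sub b).pow 2).const_mul (-A)).add
      ((((hasDerivAt_id x).sub_const a).pow 2).const_mul B)).div_const (2 * (b - a))
    refine HasDerivAt.congr_deriv this ?_
    simp
    field_simp
  have hsum : ContinuousOn (fun x => G x + f x) (Icc a b) := hGc.continuousOn.add hc
  have hconv : ConvexOn ℝ (Icc a b) (fun x => G x + f x) := by
    refine convexOn_of_hasDerivWithinAt2_nonneg (convex_Icc a b) hsum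
      (f' := fun x => (-A * (b - x) ^ 2 + B * (x - a) ^ 2) / (2 * (b - a)) + f' x)
      (f'' := fun x => (A * (b - x) + B * (x - a)) / (b - a) + f'' x) ?_ ?_ ?_
    all_goals
      rw [interior_Icc]
      intro x hx
    · exact ((hG' x).add (hf' x hx)).hasDerivWithinAt
    · exact ((hG'' x).add (hf'' x hx)).hasDerivWithinAt
    · linarith [hbd x hx]
  have hh := hermite_hadamard_right hab hsum hconv
  have hIG : ∫ x in a..b, G x = (A + B) * (b - a) ^ 3 / 24 := by
    have hF : ∀ x ∈ uIcc a b, HasDerivAt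
        (fun x => (-A * (b - x) ^ 4 + B * (x - a) ^ 4) / (24 * (b - a))) (G x) x := by
      intro x _
      have := (((((hasDerivAt_id x).const_sub b).pow 4).const_mul (-A)).add
        ((((hasDerivAt_id x).sub_const a).pow 4).const_mul B)).div_const (24 * (b - a))
      refine HasDerivAt.congr_deriv this ?_
      simp [hG]
      field_simp
      ring
    rw [intervalIntegral.integral_eq_sub_of_hasDerivAt hF (hGc.intervalIntegrable a b)]
    field_simp
    ring
  rw [intervalIntegral.integral_add (hGc.intervalIntegrable a b)
    (hc.intervalIntegrable_of_Icc hab.le), hIG] at hh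
  have hGa : G a = A * (b - a) ^ 2 / 6 := by simp only [hG]; field_simp; ring
  have hGb : G b = B * (b - a) ^ 2 / 6 := by simp only [hG]; field_simp; ring
  rw [hGa, hGb] at hh
  rw [one_div, inv_mul_eq_div, sub_le_iff_le_add, div_le_iff₀ hba]
  linarith

/-- Corollary of Theorem 3.1 with m = α = p = 1 and n = 2. -/
theorem cor31_convex (a b : ℝ) (f : ℝ → ℝ)
    (ha : 0 < a) (hab : a < b)
    (hdiff : ∀ k < 2, DifferentiableOn ℝ (iteratedDerivWithin k f (Set.Icc 0 b)) (Set.Icc 0 b))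
    (hint : IntegrableOn (fun x => |iteratedDerivWithin 2 f (Set.Icc 0 b) x|) (Set.Icc 0 b))
    (hconv : ConvexOn ℝ (Set.Icc (0:ℝ) b) (fun x => |iteratedDerivWithin 2 f (Set.Icc 0 b) x|)) :
    |(f a + f b) / 2 - (1 / (b - a)) * ∫ x in a..b, f x|
    ≤ ((b - a) ^ 2 / 24)
        * (|iteratedDerivWithin 2 f (Set.Icc 0 b) a| + |iteratedDerivWithin 2 f (Set.Icc 0 b) b|) := by
  have hba : 0 < b - a := sub_pos.2 hab
  have hderiv : ∀ k < 2, ∀ x ∈ Ioo a b, HasDerivAt (iteratedDerivWithin k f (Icc 0 b))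
      (iteratedDerivWithin (k + 1) f (Icc 0 b) x) x := by
    intro k hk x hx
    have hx0 : 0 < x := ha.trans hx.1
    rw [iteratedDerivWithin_succ]
    exact (hdiff k hk x ⟨hx0.le, hx.2.le⟩).hasDerivWithinAt.hasDerivAt (Icc_mem_nhds hx0 hx.2)
  have h0 : iteratedDerivWithin 0 f (Icc 0 b) = f := iteratedDerivWithin_zero
  have hc : ContinuousOn f (Icc a b) := by
    have := (hdiff 0 (by norm_num)).continuousOn
    rw [h0] at this
    exact this.mono (Icc_subset_Icc_left ha.le)
  have hf' := hderiv 0 (by norm_num)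
  rw [h0] at hf'
  have hf'' := hderiv 1 (by norm_num)
  norm_num only at hf' hf''
  have hbd : ∀ x ∈ Ioo a b, |iteratedDerivWithin 2 f (Icc 0 b) x| ≤
      (|iteratedDerivWithin 2 f (Icc 0 b) a| * (b - x)
        + |iteratedDerivWithin 2 f (Icc 0 b) b| * (x - a)) / (b - a) := by
    intro x hx
    have key := hconv.2 (x := a) (y := b) ⟨ha.le, hab.le⟩ ⟨(ha.trans hab).le, le_rfl⟩
      (div_nonneg (sub_nonneg.2 hx.2.le) hba.le) (div_nonneg (sub_nonneg.2 hx.1.le) hba.le)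
      (by field_simp; ring)
    simp only [smul_eq_mul] at key
    have e : (b - x) / (b - a) * a + (x - a) / (b - a) * b = x := by field_simp; ring
    rw [e] at key
    refine key.trans_eq ?_
    field_simp
  have h1 := trapezoid_one_sided hab hc hf' hf''
    (fun x hx => (neg_le_abs _).trans (hbd x hx))
  have h2 := trapezoid_one_sided hab hc.neg (fun x hx => (hf' x hx).neg)
    (fun x hx => (hf'' x hx).neg)
    (fun x hx => by simpa using (le_abs_self _).trans (hbd x hx))
  simp only [Pi.neg_apply, intervalIntegral.integral_neg] at h2
  rw [abs_le]
  constructor <;> linarith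
end

section
/- Let b > a > 0. If f is twice differentiable on [0,b], |f''| is integrable on [0,b], and |f''|² is convex on [0,b], then |(f(a)+f(b))/2 − (1/(b−a))·∫_a^b f(x) dx| ≤ ((b−a)²/12)·[ (|f''(a)|² + |f''(b)|²)/2 ]^{1/2}. -/
open MeasureTheory Real Set

/-!
The trapezoid error has the Peano-kernel form
`(f a + f b) / 2 - (∫ f) / (b - a) = (∫ (x - a) (b - x) f'' x) / (2 (b - a))`.
To bound the right-hand side, `trapezoid_error_le` compares, by monotonicity, an explicit
primitive of `(x - a) (b - x) f'' x` with a polynomial primitive of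
`(x - a) (b - x) (u (b - x) + v (x - a))`, where the last factor is an affine bound for `|f''|`.

With `M² = (|f'' a|² + |f'' b|²) / 2`, convexity bounds `|f''|²` by its chord, and
`|f''| ≤ (|f''|² / M + M) / 2` (AM-GM) turns this into an affine bound for `|f''|` whose integral
against the kernel, by symmetry of the kernel, gives exactly the constant `(b - a)² M / 12`.
-/

/-- Trapezoid error under an affine bound `u (b - x) + v (x - a)` for the absolute value of the
second derivative `h = f''`, where `g = f'`. -/
lemma trapezoid_error_le {a b u v : ℝ} (hab : a < b) {f g h : ℝ → ℝ}
    (hfc : ContinuousOn f (Icc a b)) (hgc : ContinuousOn g (Icc a b))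
    (hf : ∀ x ∈ Ioo a b, HasDerivAt f (g x) x)
    (hg : ∀ x ∈ Ioo a b, HasDerivAt g (h x) x)
    (hh : ∀ x ∈ Ioo a b, |h x| ≤ u * (b - x) + v * (x - a)) :
    |(f a + f b) / 2 - (1 / (b - a)) * ∫ x in a..b, f x| ≤ (b - a) ^ 3 * (u + v) / 24 := by
  have hL : 0 < b - a := sub_pos.2 hab
  have hfi : IntervalIntegrable f volume a b := hfc.intervalIntegrable_of_Icc hab.le
  -- `G` is a primitive of `(x - a) (b - x) h x`, `P` of the corresponding polynomial bound.
  let G : ℝ → ℝ := fun x =>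
    (x - a) * (b - x) * g x - (a + b - 2 * x) * f x - 2 * ∫ y in a..x, f y
  let P : ℝ → ℝ := fun x =>
    u * ((x - a) ^ 2 * (b - a) ^ 2 / 2 - 2 * (b - a) * (x - a) ^ 3 / 3 + (x - a) ^ 4 / 4)
      + v * ((b - a) * (x - a) ^ 3 / 3 - (x - a) ^ 4 / 4)
  have hGc : ContinuousOn G (Icc a b) := by
    have hI : ContinuousOn (fun x => ∫ y in a..x, f y) (Icc a b) := by
      have := intervalIntegral.continuousOn_primitive_interval' hfi left_mem_uIcc
      rwa [uIcc_of_le hab.le] at this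
    exact (((by fun_prop : Continuous fun x : ℝ => (x - a) * (b - x)).continuousOn.mul hgc).sub
      ((by fun_prop : Continuous fun x : ℝ => a + b - 2 * x).continuousOn.mul hfc)).sub
      (continuousOn_const.mul hI)
  have hPc : ContinuousOn P (Icc a b) := by
    apply Continuous.continuousOn; fun_prop
  have hG : ∀ x ∈ Ioo a b, HasDerivAt G ((x - a) * (b - x) * h x) x := by
    intro x hx
    have hI : HasDerivAt (fun x => ∫ y in a..x, f y) (f x) x := by
      apply intervalIntegral.integral_hasDerivAt_right
      · exact hfi.mono_set (uIcc_subset_uIcc_left (by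
          rw [uIcc_of_le hab.le]; exact Ioo_subset_Icc_self hx))
      · exact (hfc.mono Ioo_subset_Icc_self).stronglyMeasurableAtFilter isOpen_Ioo x hx
      · exact (hf x hx).continuousAt
    have hi := hasDerivAt_id' x
    have := ((((hi.sub_const a).mul (hi.const_sub b)).mul (hg x hx)).sub
      (((hi.const_mul 2).const_sub (a + b)).mul (hf x hx))).sub (hI.const_mul 2)
    refine this.congr_deriv ?_
    simp only [Pi.mul_apply]
    ring
  have hP : ∀ x, HasDerivAt P ((x - a) * (b - x) * (u * (b - x) + v * (x - a))) x := by
    intro x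
    have hs := (hasDerivAt_id' x).sub_const a
    have := ((((((hs.pow 2).mul_const ((b - a) ^ 2)).div_const 2).sub
      (((hs.pow 3).const_mul (2 * (b - a))).div_const 3)).add
      ((hs.pow 4).div_const 4)).const_mul u).add
      (((((hs.pow 3).const_mul (b - a)).div_const 3).sub ((hs.pow 4).div_const 4)).const_mul v)
    refine this.congr_deriv ?_
    norm_num
    ring
  have ha' := left_mem_Icc.2 hab.le
  have hb' := right_mem_Icc.2 hab.le
  have hw : ∀ x ∈ Ioo a b, 0 ≤ (x - a) * (b - x) := fun x hx =>
    mul_nonneg (sub_nonneg.2 hx.1.le) (sub_nonneg.2 hx.2.le)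
  have h1 : P a - G a ≤ P b - G b := by
    refine monotoneOn_of_deriv_nonneg (convex_Icc a b) (hPc.sub hGc) ?_ ?_ ha' hb' hab.le
    · rw [interior_Icc]
      exact fun x hx => ((hP x).sub (hG x hx)).differentiableAt.differentiableWithinAt
    · rw [interior_Icc]
      intro x hx
      rw [((hP x).sub (hG x hx)).deriv, ← mul_sub]
      exact mul_nonneg (hw x hx) (by linarith [hh x hx, le_abs_self (h x)])
  have h2 : P a + G a ≤ P b + G b := by
    refine monotoneOn_of_deriv_nonneg (convex_Icc a b) (hPc.add hGc) ?_ ?_ ha' hb' hab.le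
    · rw [interior_Icc]
      exact fun x hx => ((hP x).add (hG x hx)).differentiableAt.differentiableWithinAt
    · rw [interior_Icc]
      intro x hx
      rw [((hP x).add (hG x hx)).deriv, ← mul_add]
      exact mul_nonneg (hw x hx) (by linarith [hh x hx, neg_abs_le (h x)])
  have hPe : P b - P a = 2 * (b - a) * ((b - a) ^ 3 * (u + v) / 24) := by
    simp only [P]; ring
  have hGe : G b - G a
      = 2 * (b - a) * ((f a + f b) / 2 - (1 / (b - a)) * ∫ x in a..b, f x) := by
    simp only [G, intervalIntegral.integral_same]
    field_simp
    ring
  have hL2 : 0 < 2 * (b - a) := by positivity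
  rw [abs_le]
  constructor
  · refine le_of_mul_le_mul_left ?_ hL2
    rw [← hGe, mul_neg, ← hPe]; linarith
  · refine le_of_mul_le_mul_left ?_ hL2
    rw [← hGe, ← hPe]; linarith

/-- Corollary of Theorem 3.1 with m = α = 1 and p = n = 2. -/
theorem cor31_sq_convex (a b : ℝ) (f : ℝ → ℝ)
    (ha : 0 < a) (hab : a < b)
    (hdiff : ∀ k < 2, DifferentiableOn ℝ (iteratedDerivWithin k f (Set.Icc 0 b)) (Set.Icc 0 b))
    (hint : IntegrableOn (fun x => |iteratedDerivWithin 2 f (Set.Icc 0 b) x|) (Set.Icc 0 b))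
    (hconv : ConvexOn ℝ (Set.Icc (0:ℝ) b)
      (fun x => |iteratedDerivWithin 2 f (Set.Icc 0 b) x| ^ 2)) :
    |(f a + f b) / 2 - (1 / (b - a)) * ∫ x in a..b, f x|
    ≤ ((b - a) ^ 2 / 12)
        * ((|iteratedDerivWithin 2 f (Set.Icc 0 b) a| ^ 2
            + |iteratedDerivWithin 2 f (Set.Icc 0 b) b| ^ 2) / 2) ^ ((1:ℝ) / 2) := by
  have hL : 0 < b - a := sub_pos.2 hab
  have hsub : Icc a b ⊆ Icc 0 b := Icc_subset_Icc_left ha.le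
  have hd0 : DifferentiableOn ℝ f (Icc 0 b) := by
    simpa only [iteratedDerivWithin_zero] using hdiff 0 (by norm_num)
  have hd1 := hdiff 1 (by norm_num)
  have hnhds : ∀ x ∈ Ioo a b, Icc 0 b ∈ nhds x := fun x hx =>
    Icc_mem_nhds (ha.trans hx.1) hx.2
  have hf : ∀ x ∈ Ioo a b, HasDerivAt f (iteratedDerivWithin 1 f (Icc 0 b) x) x := by
    intro x hx
    rw [iteratedDerivWithin_one]
    exact (hd0 x (hsub (Ioo_subset_Icc_self hx))).hasDerivWithinAt.hasDerivAt (hnhds x hx)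
  have hg : ∀ x ∈ Ioo a b, HasDerivAt (iteratedDerivWithin 1 f (Icc 0 b))
      (iteratedDerivWithin 2 f (Icc 0 b) x) x := by
    intro x hx
    rw [show iteratedDerivWithin 2 f (Icc 0 b) x
      = derivWithin (iteratedDerivWithin 1 f (Icc 0 b)) (Icc 0 b) x from
      congrFun iteratedDerivWithin_succ x]
    exact (hd1 x (hsub (Ioo_subset_Icc_self hx))).hasDerivWithinAt.hasDerivAt (hnhds x hx)
  have hfc := hd0.continuousOn.mono hsub
  have hgc := hd1.continuousOn.mono hsub
  generalize iteratedDerivWithin 2 f (Icc 0 b) = h at *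
  generalize iteratedDerivWithin 1 f (Icc 0 b) = g at *
  have hchord : ∀ x ∈ Ioo a b,
      |h x| ^ 2 ≤ (|h a| ^ 2 * (b - x) + |h b| ^ 2 * (x - a)) / (b - a) := by
    intro x hx
    have := hconv.2 (hsub (left_mem_Icc.2 hab.le)) (hsub (right_mem_Icc.2 hab.le))
      (div_nonneg (sub_nonneg.2 hx.2.le) hL.le) (div_nonneg (sub_nonneg.2 hx.1.le) hL.le)
      (by field_simp; ring)
    simp only [smul_eq_mul] at this
    rw [show (b - x) / (b - a) * a + (x - a) / (b - a) * b = x by field_simp; ring] at this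
    refine this.trans_eq ?_
    field_simp
  rw [← Real.sqrt_eq_rpow]
  set M := √((|h a| ^ 2 + |h b| ^ 2) / 2)
  have hM0 : 0 ≤ M := Real.sqrt_nonneg _
  have hM2 : M ^ 2 = (|h a| ^ 2 + |h b| ^ 2) / 2 := Real.sq_sqrt (by positivity)
  clear_value M
  rcases hM0.eq_or_lt with h0 | hpos
  · -- Here `f''` vanishes at both endpoints, so its chord bound is zero.
    rw [← h0] at hM2 ⊢
    have hA : |h a| ^ 2 = 0 := by nlinarith [sq_nonneg |h a|, sq_nonneg |h b|]
    have hB : |h b| ^ 2 = 0 := by nlinarith [sq_nonneg |h a|, sq_nonneg |h b|]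
    have := trapezoid_error_le (u := 0) (v := 0) hab hfc hgc hf hg (by
      intro x hx
      have := hchord x hx
      rw [hA, hB] at this
      simp only [zero_mul, add_zero, zero_div] at this ⊢
      nlinarith)
    simpa using this
  · -- The coefficients come from `|h x| ≤ (|h x| ^ 2 / M + M) / 2` and the chord bound.
    refine (trapezoid_error_le (u := (|h a| ^ 2 / M + M) / (2 * (b - a)))
      (v := (|h b| ^ 2 / M + M) / (2 * (b - a))) hab hfc hgc hf hg ?_).trans_eq ?_
    · intro x hx
      have h1 : |h x| ≤ (|h x| ^ 2 / M + M) / 2 := by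
        rw [show (|h x| ^ 2 / M + M) / 2 = (|h x| ^ 2 + M ^ 2) / (2 * M) by field_simp,
          le_div_iff₀ (by positivity)]
        nlinarith [sq_nonneg (|h x| - M)]
      have h2 := div_le_div_of_nonneg_right (hchord x hx) hpos.le
      calc |h x| ≤ (|h x| ^ 2 / M + M) / 2 := h1
        _ ≤ ((|h a| ^ 2 * (b - x) + |h b| ^ 2 * (x - a)) / (b - a) / M + M) / 2 := by linarith
        _ = _ := by field_simp; ring
    · have hB : |h b| ^ 2 = 2 * M ^ 2 - |h a| ^ 2 := by linarith
      rw [hB]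
      field_simp
      ring
end

section
/- Let b > a > 0 and let p, q > 1 satisfy 1/p + 1/q = 1. If f is twice differentiable on [0,b], |f''| is integrable on [0,b], and |f''|^q is convex on [0,b], then |(f(a)+f(b))/2 − (1/(b−a))·∫_a^b f(x) dx| ≤ ((b−a)²/(2(p+1)^{1/p}(q+2)^{1/q}))·[ ((q+1)|f''(a)|^q + |f''(b)|^q)/(q+1) ]^{1/q}. -/
open MeasureTheory Real Set

/-!
Two integrations by parts give
`(b - a) (f a + f b) - 2 ∫ f = ∫ (x - a) (b - x) f''(x) dx` over `[a, b]`
(`trapezoid_identity`). Convexity of `|f''|^q` along `x = b - (b - a) t` bounds `|f''(x)|` by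
`(t |f''(a)|^q + (1 - t) |f''(b)|^q)^(1/q)`. After rescaling to `[0, 1]`, Hölder's inequality for
the factors `1 - t` and `t (t A + (1 - t) B)^(1/q)` gives exactly the stated constant, because
`∫ (1 - t)^p = 1 / (p + 1)` and `∫ t^q (t A + (1 - t) B) = ((q + 1) A + B) / ((q + 1) (q + 2))`
(`holder_unit`).
-/

lemma trapezoid_identity {a b : ℝ} {f g h : ℝ → ℝ} (hab : a ≤ b)
    (hf : ContinuousOn f (Icc a b)) (hg : ContinuousOn g (Icc a b))
    (hfg : ∀ x ∈ Ioo a b, HasDerivAt f (g x) x) (hgh : ∀ x ∈ Ioo a b, HasDerivAt g (h x) x)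
    (hh : IntervalIntegrable h volume a b) :
    ∫ x in a..b, (x - a) * (b - x) * h x = (b - a) * (f a + f b) - 2 * ∫ x in a..b, f x := by
  have hfi : IntervalIntegrable f volume a b :=
    ContinuousOn.intervalIntegrable (by rwa [uIcc_of_le hab])
  have hhi : IntervalIntegrable (fun x => (x - a) * (b - x) * h x) volume a b :=
    hh.continuousOn_mul (by fun_prop)
  have key := intervalIntegral.integral_eq_sub_of_hasDerivAt_of_le
    (f := fun x => (x - a) * (b - x) * g x - (a + b - 2 * x) * f x)
    (f' := fun x => (x - a) * (b - x) * h x + 2 * f x) hab (by fun_prop)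
    (fun x hx => by
      have h1 : HasDerivAt (fun x => (x - a) * (b - x)) (1 * (b - x) + (x - a) * (-1)) x :=
        ((hasDerivAt_id x).sub_const a).mul ((hasDerivAt_id x).const_sub b)
      have h2 : HasDerivAt (fun x => a + b - 2 * x) (-(2 * 1)) x :=
        ((hasDerivAt_id x).const_mul 2).const_sub (a + b)
      exact ((h1.mul (hgh x hx)).sub (h2.mul (hfg x hx))).congr_deriv (by ring))
    (hhi.add (hfi.const_mul 2))
  rw [intervalIntegral.integral_add hhi (hfi.const_mul 2),
    intervalIntegral.integral_const_mul] at key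
  linear_combination key

lemma integral_one_sub_rpow {p : ℝ} (hp : 1 < p) :
    ∫ t in (0:ℝ)..1, (1 - t) ^ p = 1 / (p + 1) := by
  rw [intervalIntegral.integral_comp_sub_left (fun t : ℝ => t ^ p) 1,
    integral_rpow (Or.inl (by linarith))]
  simp [Real.zero_rpow (by linarith : p + 1 ≠ 0)]

lemma integral_rpow_mul_affine {q : ℝ} (hq : 1 < q) (A B : ℝ) :
    ∫ t in (0:ℝ)..1, t ^ q * (t * A + (1 - t) * B)
      = ((q + 1) * A + B) / ((q + 1) * (q + 2)) := by
  have e : ∀ t ∈ uIcc (0:ℝ) 1, t ^ q * (t * A + (1 - t) * B)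
      = t ^ (q + 1) * (A - B) + t ^ q * B := by
    intro t ht
    rw [uIcc_of_le zero_le_one] at ht
    rw [Real.rpow_add_one' ht.1 (by linarith)]
    ring
  have i1 : IntervalIntegrable (fun t : ℝ => t ^ (q + 1)) volume 0 1 :=
    intervalIntegral.intervalIntegrable_rpow' (by linarith)
  have i2 : IntervalIntegrable (fun t : ℝ => t ^ q) volume 0 1 :=
    intervalIntegral.intervalIntegrable_rpow' (by linarith)
  rw [intervalIntegral.integral_congr e,
    intervalIntegral.integral_add (i1.mul_const _) (i2.mul_const _),
    intervalIntegral.integral_mul_const, intervalIntegral.integral_mul_const,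
    integral_rpow (Or.inl (by linarith)), integral_rpow (Or.inl (by linarith))]
  have h1 : q + 1 ≠ 0 := by linarith
  have h2 : q + 2 ≠ 0 := by linarith
  have h3 : q + 1 + 1 = q + 2 := by ring
  rw [h3, Real.one_rpow, Real.one_rpow, Real.zero_rpow h1, Real.zero_rpow h2]
  field_simp
  ring

lemma holder_unit {p q A B : ℝ} (hp : 1 < p) (hq : 1 < q) (hpq : 1 / p + 1 / q = 1)
    (hA : 0 ≤ A) (hB : 0 ≤ B) :
    ∫ t in (0:ℝ)..1, (1 - t) * (t * (t * A + (1 - t) * B) ^ (1 / q))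
      ≤ (1 / (p + 1)) ^ (1 / p) * (((q + 1) * A + B) / ((q + 1) * (q + 2))) ^ (1 / q) := by
  have hc : p.HolderConjugate q := by
    rw [Real.holderConjugate_iff]
    exact ⟨hp, by simpa using hpq⟩
  have hq0 : 0 ≤ 1 / q := by positivity
  have memLp_of_cont : ∀ (φ : ℝ → ℝ) (r : ℝ), Continuous φ →
      MemLp φ (ENNReal.ofReal r) (volume.restrict (Ioc (0:ℝ) 1)) := by
    intro φ r hφ
    obtain ⟨C, hC⟩ := isCompact_Icc.exists_bound_of_continuousOn
      (hφ.continuousOn (s := Icc (0:ℝ) 1))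
    refine MemLp.of_bound hφ.aestronglyMeasurable C ?_
    filter_upwards [ae_restrict_mem measurableSet_Ioc] with t ht
    exact hC t (Ioc_subset_Icc_self ht)
  have nn : ∀ t ∈ Ioc (0:ℝ) 1, 0 ≤ t * A + (1 - t) * B := fun t ht =>
    add_nonneg (mul_nonneg ht.1.le hA) (mul_nonneg (by linarith [ht.2]) hB)
  have c2 : Continuous (fun t : ℝ => t * (t * A + (1 - t) * B) ^ (1 / q)) :=
    continuous_id.mul (Continuous.rpow_const (by fun_prop) (fun _ => Or.inr hq0))
  have H := integral_mul_le_Lp_mul_Lq_of_nonneg (μ := volume.restrict (Ioc (0:ℝ) 1)) hc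
    (f := fun t => 1 - t) (g := fun t => t * (t * A + (1 - t) * B) ^ (1 / q))
    (by
      filter_upwards [ae_restrict_mem measurableSet_Ioc] with t ht
      simpa using ht.2)
    (by
      filter_upwards [ae_restrict_mem measurableSet_Ioc] with t ht
      exact mul_nonneg ht.1.le (Real.rpow_nonneg (nn t ht) _))
    (memLp_of_cont _ _ (by fun_prop)) (memLp_of_cont _ _ c2)
  have e2 : ∫ t in Ioc (0:ℝ) 1, (t * (t * A + (1 - t) * B) ^ (1 / q)) ^ q
      = ∫ t in Ioc (0:ℝ) 1, t ^ q * (t * A + (1 - t) * B) := by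
    refine setIntegral_congr_fun measurableSet_Ioc fun t ht => ?_
    rw [Real.mul_rpow ht.1.le (Real.rpow_nonneg (nn t ht) _), ← Real.rpow_mul (nn t ht),
      one_div_mul_cancel (by linarith), Real.rpow_one]
  rw [e2] at H
  simp only [← intervalIntegral.integral_of_le (zero_le_one' ℝ)] at H
  rwa [integral_one_sub_rpow hp, integral_rpow_mul_affine hq] at H

/-- Corollary of Theorem 3.2 with m = α = 1 and n = 2. -/
theorem cor32_convex (a b p q : ℝ) (f : ℝ → ℝ)
    (ha : 0 < a) (hab : a < b)
    (hp : 1 < p) (hq : 1 < q) (hpq : 1 / p + 1 / q = 1)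
    (hdiff : ∀ k < 2, DifferentiableOn ℝ (iteratedDerivWithin k f (Set.Icc 0 b)) (Set.Icc 0 b))
    (hint : IntegrableOn (fun x => |iteratedDerivWithin 2 f (Set.Icc 0 b) x|) (Set.Icc 0 b))
    (hconv : ConvexOn ℝ (Set.Icc (0:ℝ) b)
      (fun x => |iteratedDerivWithin 2 f (Set.Icc 0 b) x| ^ q)) :
    |(f a + f b) / 2 - (1 / (b - a)) * ∫ x in a..b, f x|
    ≤ ((b - a) ^ 2 / (2 * (p + 1) ^ (1 / p) * (q + 2) ^ (1 / q)))
        * ( ((q + 1) * |iteratedDerivWithin 2 f (Set.Icc 0 b) a| ^ q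
              + |iteratedDerivWithin 2 f (Set.Icc 0 b) b| ^ q) / (q + 1) ) ^ (1 / q) := by
  have hL : 0 < b - a := sub_pos.2 hab
  have hq0 : 0 < q := by linarith
  have hsub : Icc a b ⊆ Icc 0 b := Icc_subset_Icc_left ha.le
  have step : ∀ k < 2, ∀ x ∈ Ioo a b, HasDerivAt (iteratedDerivWithin k f (Icc 0 b))
      (iteratedDerivWithin (k + 1) f (Icc 0 b) x) x := by
    intro k hk x hx
    rw [iteratedDerivWithin_succ]
    exact ((hdiff k hk) x (hsub (Ioo_subset_Icc_self hx))).hasDerivWithinAt.hasDerivAt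
      (Icc_mem_nhds (ha.trans hx.1) hx.2)
  have hf0 : iteratedDerivWithin 0 f (Icc 0 b) = f := iteratedDerivWithin_zero
  have hcf : ContinuousOn f (Icc a b) := by
    have := (hdiff 0 (by norm_num)).continuousOn.mono hsub
    rwa [hf0] at this
  have hcg := (hdiff 1 (by norm_num)).continuousOn.mono hsub
  have hfg := step 0 (by norm_num)
  rw [hf0] at hfg
  have hgh := step 1 (by norm_num)
  norm_num only at hfg hgh
  set g := iteratedDerivWithin 1 f (Icc 0 b)
  set h := iteratedDerivWithin 2 f (Icc 0 b)
  have hhi : IntervalIntegrable h volume a b := by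
    rw [intervalIntegrable_iff_integrableOn_Ioo_of_le hab.le]
    have hm : AEStronglyMeasurable h (volume.restrict (Ioo a b)) := by
      -- on the open interval `h` agrees with the derivative of `g`, which is always measurable
      refine (measurable_deriv g).aestronglyMeasurable.congr ?_
      filter_upwards [ae_restrict_mem measurableSet_Ioo] with x hx
      exact (hgh x hx).deriv
    exact (integrable_norm_iff hm).1 (hint.mono_set (Ioo_subset_Icc_self.trans hsub))
  have hid := trapezoid_identity hab.le hcf hcg hfg hgh hhi
  set A := |h a| ^ q
  set B := |h b| ^ q
  have hA : 0 ≤ A := by positivity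
  have hB : 0 ≤ B := by positivity
  have hbd : ∀ t ∈ Icc (0:ℝ) 1, |h (b - (b - a) * t)| ≤ (t * A + (1 - t) * B) ^ (1 / q) := by
    intro t ht
    have hc := hconv.2 (hsub (left_mem_Icc.2 hab.le)) (hsub (right_mem_Icc.2 hab.le))
      ht.1 (sub_nonneg.2 ht.2) (by ring)
    simp only [smul_eq_mul] at hc
    rw [show t * a + (1 - t) * b = b - (b - a) * t by ring] at hc
    have := Real.rpow_le_rpow (by positivity) hc (by positivity : 0 ≤ 1 / q)
    rwa [← Real.rpow_mul (abs_nonneg _), mul_one_div_cancel hq0.ne', Real.rpow_one] at this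
  have hchange : ∫ x in a..b, (x - a) * (b - x) * h x = (b - a) ^ 3 *
      ∫ t in (0:ℝ)..1, (1 - t) * (t * h (b - (b - a) * t)) := by
    have := intervalIntegral.integral_comp_sub_mul (a := 0) (b := 1)
      (fun x => (x - a) * (b - x) * h x) hL.ne' b
    rw [show b - (b - a) * 1 = a by ring, show b - (b - a) * 0 = b by ring, smul_eq_mul] at this
    rw [eq_comm, inv_mul_eq_iff_eq_mul₀ hL.ne'] at this
    rw [this, show (b - a) ^ 3 = (b - a) * (b - a) ^ 2 by ring, mul_assoc,
      ← intervalIntegral.integral_const_mul ((b - a) ^ 2)]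
    congr 1
    refine intervalIntegral.integral_congr fun t _ => ?_
    ring
  have hbound : |∫ t in (0:ℝ)..1, (1 - t) * (t * h (b - (b - a) * t))|
      ≤ ∫ t in (0:ℝ)..1, (1 - t) * (t * (t * A + (1 - t) * B) ^ (1 / q)) := by
    rw [← Real.norm_eq_abs]
    refine intervalIntegral.norm_integral_le_of_norm_le zero_le_one
      (Filter.Eventually.of_forall fun t ht => ?_) (Continuous.intervalIntegrable ?_ _ _)
    · rw [norm_mul, norm_mul, Real.norm_eq_abs, Real.norm_eq_abs, Real.norm_eq_abs,
        abs_of_nonneg (sub_nonneg.2 ht.2), abs_of_nonneg ht.1.le]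
      have := hbd t (Ioc_subset_Icc_self ht)
      have h1 : 0 ≤ 1 - t := sub_nonneg.2 ht.2
      have h2 := ht.1.le
      gcongr
    · exact Continuous.mul (by fun_prop) (continuous_id.mul
        (Continuous.rpow_const (by fun_prop) (fun _ => Or.inr (by positivity))))
  have hmain := hbound.trans (holder_unit hp hq hpq hA hB)
  have hlhs : (f a + f b) / 2 - (1 / (b - a)) * ∫ x in a..b, f x
      = (b - a) ^ 2 / 2 * ∫ t in (0:ℝ)..1, (1 - t) * (t * h (b - (b - a) * t)) := by
    rw [hchange] at hid
    generalize (∫ t in (0:ℝ)..1, (1 - t) * (t * h (b - (b - a) * t))) = J at hid ⊢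
    field_simp
    linear_combination -hid
  rw [hlhs, abs_mul, abs_of_nonneg (by positivity)]
  refine (mul_le_mul_of_nonneg_left hmain (by positivity)).trans_eq ?_
  rw [← div_div, Real.div_rpow (by positivity) (by linarith : 0 ≤ q + 2),
    Real.div_rpow zero_le_one (by linarith), Real.one_rpow]
  have h1 : 0 < (p + 1) ^ (1 / p) := Real.rpow_pos_of_pos (by linarith) _
  have h2 : 0 < (q + 2) ^ (1 / q) := Real.rpow_pos_of_pos (by linarith) _
  generalize (p + 1) ^ (1 / p) = P at *
  generalize (q + 2) ^ (1 / q) = Q at *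
  field_simp
end

section
/- Let b > a > 0 and let p, q > 1 satisfy 1/p + 1/q = 1. Then |1/H(a,b) − 1/L(a,b)| ≤ ((b−a)² / ((p+1)^{1/p}(q+2)^{1/q}))·[ 1/a^{3q} + 1/((q+1)·b^{3q}) ]^{1/q}. -/
open Real

/-!
The constants leave enough room for a proof without Hölder's inequality. With `1/p + 1/q = 1`,
weighted AM-GM gives
`(p+1)^(1/p) (q+2)^(1/q) ≤ (p+1)/p + (q+2)/q = 3 + 1/q ≤ 4`,
and dropping the `b`-term from the bracket bounds its `1/q`-th power below by `1/a^3`. So it is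
enough that `|1/H - 1/L| ≤ (b-a)^2 / (4 a^3)`. Writing `b = a (1+u)`, this follows from
`2u/(u+2) ≤ log (1+u)` (upper bound for `1/H - 1/L`) and `log x ≤ sinh (log x) = (x - 1/x)/2`
(which gives `1/H - 1/L ≥ 0`).
-/

lemma abs_inv_harm_sub_inv_log_le (a b : ℝ) (ha : 0 < a) (hab : a < b) :
    |(1 / a + 1 / b) / 2 - (Real.log b - Real.log a) / (b - a)| ≤ (b - a) ^ 2 / (4 * a ^ 3) := by
  have hb : 0 < b := ha.trans hab
  have hd : 0 < b - a := sub_pos.2 hab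
  have hlog : Real.log b - Real.log a = Real.log (b / a) :=
    (Real.log_div hb.ne' ha.ne').symm
  have hup : Real.log (b / a) ≤ (b / a - a / b) / 2 := by
    have h0 : 0 ≤ Real.log (b / a) := Real.log_nonneg ((one_le_div ha).2 hab.le)
    have h := Real.self_le_sinh_iff.2 h0
    rwa [Real.sinh_log (by positivity), inv_div] at h
  have hlow : 2 * (b - a) / (b + a) ≤ Real.log (b / a) := by
    have h := Real.le_log_one_add_of_nonneg (x := (b - a) / a) (by positivity)
    have e1 : 1 + (b - a) / a = b / a := by field_simp; ring
    have e2 : 2 * ((b - a) / a) / ((b - a) / a + 2) = 2 * (b - a) / (b + a) := by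
      have : (b - a) / a + 2 = (b + a) / a := by field_simp; ring
      rw [this]; field_simp
    rwa [e1, e2] at h
  rw [hlog]
  have hnn : 0 ≤ (1 / a + 1 / b) / 2 - Real.log (b / a) / (b - a) := by
    rw [sub_nonneg, div_le_iff₀ hd]
    refine hup.trans (le_of_eq ?_)
    field_simp; ring
  rw [abs_of_nonneg hnn]
  have h1 : 2 / (b + a) ≤ Real.log (b / a) / (b - a) := by
    rw [le_div_iff₀ hd]
    refine le_trans (le_of_eq ?_) hlow
    ring
  have h2 : (1 / a + 1 / b) / 2 - 2 / (b + a) = (b - a) ^ 2 / (2 * a * b * (b + a)) := by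
    field_simp; ring
  have h3 : (b - a) ^ 2 / (2 * a * b * (b + a)) ≤ (b - a) ^ 2 / (4 * a ^ 3) := by
    apply div_le_div_of_nonneg_left (by positivity) (by positivity)
    have : a * (2 * a) ≤ b * (b + a) := by
      apply mul_le_mul hab.le (by linarith) (by positivity) hb.le
    nlinarith
  linarith

/-- mean inequality (Theorem 4.4), where `1/H(a,b) = (1/a + 1/b)/2` and
`1/L(a,b) = (log b - log a)/(b - a)`. -/
theorem mean_ineq_four (a b p q : ℝ)
    (ha : 0 < a) (hab : a < b)
    (hp : 1 < p) (hq : 1 < q) (hpq : 1 / p + 1 / q = 1) :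
    |(1 / a + 1 / b) / 2 - (Real.log b - Real.log a) / (b - a)|
    ≤ ((b - a) ^ 2 / ((p + 1) ^ (1 / p) * (q + 2) ^ (1 / q)))
        * (1 / a ^ (3 * q) + 1 / ((q + 1) * b ^ (3 * q))) ^ (1 / q) := by
  have hb : 0 < b := ha.trans hab
  have hp0 : 0 < p := by linarith
  have hq0 : 0 < q := by linarith
  refine (abs_inv_harm_sub_inv_log_le a b ha hab).trans ?_
  have hden : (p + 1) ^ (1 / p) * (q + 2) ^ (1 / q) ≤ 4 := by
    have h := Real.geom_mean_le_arith_mean2_weighted (w₁ := 1 / p) (w₂ := 1 / q)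
      (p₁ := p + 1) (p₂ := q + 2) (by positivity) (by positivity) (by positivity)
      (by positivity) hpq
    have e1 : 1 / p * (p + 1) = 1 + 1 / p := by field_simp
    have e2 : 1 / q * (q + 2) = 1 + 2 * (1 / q) := by field_simp
    have : 0 < 1 / p := by positivity
    linarith
  have hbr : 1 / a ^ 3 ≤ (1 / a ^ (3 * q) + 1 / ((q + 1) * b ^ (3 * q))) ^ (1 / q) := by
    have e : 1 / a ^ 3 = (1 / a ^ (3 * q)) ^ (1 / q) := by
      rw [Real.div_rpow zero_le_one (by positivity), Real.one_rpow, ← Real.rpow_mul ha.le,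
        show 3 * q * (1 / q) = ((3 : ℕ) : ℝ) by field_simp; norm_num, Real.rpow_natCast]
    rw [e]
    apply Real.rpow_le_rpow (by positivity) _ (by positivity)
    have : 0 < 1 / ((q + 1) * b ^ (3 * q)) := by positivity
    linarith
  calc (b - a) ^ 2 / (4 * a ^ 3) = (b - a) ^ 2 / 4 * (1 / a ^ 3) := by field_simp
    _ ≤ _ := by
      apply mul_le_mul _ hbr (by positivity) (by positivity)
      exact div_le_div_of_nonneg_left (by positivity) (by positivity) hden
end

section
/- Let b > a > 0 and p ≥ 1. Then |1/H(a,b) − 1/L(a,b)| ≤ (2(b−a)² / (2^{1−1/p}·[(p+2)(p+3)]^{1/p}))·[ 1/a^{3p} + 2/((p+1)·b^{3p}) ]^{1/p}. (This follows from applying the general second-order Hermite–Hadamard-type bound with convexity exponent p to the function f(x) = 1/x, whose second derivative is 2/x³.) -/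
/-!
With `x = b / a > 1`, the difference `1/H - 1/L` lies between `0` and `(b - a)² / (6 a³)`: both bounds
are elementary estimates of `log x`, obtained by differentiating in `x`
(`log_le_half_sub_inv`, `half_sub_inv_sub_cube_le_log`). On the other side, dropping the term in `b`,
the right-hand side is at least `(b - a)² a⁻³ (2 / ((p + 2)(p + 3)))^(1/p)`, and this dominates
`(b - a)² / (6 a³)` because `(p + 2)(p + 3) / 2 ≤ 6 ^ p` for `p ≥ 1`.
-/

lemma log_le_half_sub_inv {x : ℝ} (hx : 1 ≤ x) : Real.log x ≤ (x - x⁻¹) / 2 := by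
  have hd : ∀ y ∈ Set.Ici (1:ℝ), HasDerivAt (fun y : ℝ => (y - y⁻¹) / 2 - Real.log y)
      ((1 - -(y ^ 2)⁻¹) / 2 - y⁻¹) y := fun y hy => by
    have hy0 : y ≠ 0 := (lt_of_lt_of_le one_pos hy).ne'
    exact (((hasDerivAt_id y).sub (hasDerivAt_inv hy0)).div_const 2).sub (Real.hasDerivAt_log hy0)
  have hm : MonotoneOn (fun y : ℝ => (y - y⁻¹) / 2 - Real.log y) (Set.Ici 1) := by
    refine monotoneOn_of_hasDerivWithinAt_nonneg (convex_Ici 1)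
      (fun y hy => (hd y hy).continuousAt.continuousWithinAt)
      (fun y hy => (hd y (interior_subset hy)).hasDerivWithinAt) (fun y hy => ?_)
    have e : (1 - -(y ^ 2)⁻¹) / 2 - y⁻¹ = (1 - y⁻¹) ^ 2 / 2 := by rw [← inv_pow]; ring
    rw [e]; positivity
  have := hm (Set.mem_Ici.2 le_rfl) hx hx
  norm_num at this
  linarith

lemma half_sub_inv_sub_cube_le_log {x : ℝ} (hx : 1 ≤ x) :
    (x - x⁻¹) / 2 - (x - 1) ^ 3 / 6 ≤ Real.log x := by
  have hd : ∀ y ∈ Set.Ici (1:ℝ),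
      HasDerivAt (fun y : ℝ => Real.log y - (y - y⁻¹) / 2 + (y - 1) ^ 3 / 6)
        (y⁻¹ - (1 - -(y ^ 2)⁻¹) / 2 + (((3:ℕ):ℝ) * (y - 1) ^ (3 - 1) * 1) / 6) y := fun y hy => by
    have hy0 : y ≠ 0 := (lt_of_lt_of_le one_pos hy).ne'
    exact ((Real.hasDerivAt_log hy0).sub
      (((hasDerivAt_id y).sub (hasDerivAt_inv hy0)).div_const 2)).add
      ((((hasDerivAt_id y).sub_const 1).pow 3).div_const 6)
  have hm : MonotoneOn (fun y : ℝ => Real.log y - (y - y⁻¹) / 2 + (y - 1) ^ 3 / 6)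
      (Set.Ici 1) := by
    refine monotoneOn_of_hasDerivWithinAt_nonneg (convex_Ici 1)
      (fun y hy => (hd y hy).continuousAt.continuousWithinAt)
      (fun y hy => (hd y (interior_subset hy)).hasDerivWithinAt) (fun y hy => ?_)
    have hy1 : (1:ℝ) ≤ y := interior_subset (s := Set.Ici (1:ℝ)) hy
    have hy0 : y ≠ 0 := by positivity
    have hi : (y⁻¹) ^ 2 ≤ 1 := pow_le_one₀ (by positivity) (inv_le_one_of_one_le₀ hy1)
    have e : y⁻¹ - (1 - -(y ^ 2)⁻¹) / 2 + (((3:ℕ):ℝ) * (y - 1) ^ (3 - 1) * 1) / 6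
        = (y - 1) ^ 2 * (1 - (y⁻¹) ^ 2) / 2 := by
      field_simp
      norm_num
      ring
    rw [e]
    have : 0 ≤ 1 - (y⁻¹) ^ 2 := by linarith
    positivity
  have := hm (Set.mem_Ici.2 le_rfl) hx hx
  norm_num at this
  linarith

lemma abs_inv_harmonic_sub_inv_log_le {a b : ℝ} (ha : 0 < a) (hab : a < b) :
    |(1 / a + 1 / b) / 2 - (Real.log b - Real.log a) / (b - a)| ≤
      (b - a) ^ 2 * (1 / (6 * a ^ 3)) := by
  have hb : 0 < b := ha.trans hab
  have hd : 0 < b - a := sub_pos.2 hab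
  have hx : 1 ≤ b / a := (one_le_div ha).2 hab.le
  have h1 := log_le_half_sub_inv hx
  have h2 := half_sub_inv_sub_cube_le_log hx
  rw [Real.log_div hb.ne' ha.ne'] at h1 h2
  have e : (1 / a + 1 / b) / 2 - (Real.log b - Real.log a) / (b - a)
      = ((b / a - (b / a)⁻¹) / 2 - (Real.log b - Real.log a)) / (b - a) := by
    field_simp
    ring
  rw [e, abs_of_nonneg (div_nonneg (by linarith) hd.le), div_le_iff₀ hd]
  have e2 : (b - a) ^ 2 * (1 / (6 * a ^ 3)) * (b - a) = (b / a - 1) ^ 3 / 6 := by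
    field_simp
  rw [e2]
  linarith

lemma add_two_mul_add_three_le_rpow {p : ℝ} (hp : 1 ≤ p) :
    (p + 2) * (p + 3) ≤ 2 * (6:ℝ) ^ p := by
  have h6 : 1 ≤ Real.log 6 := by
    rw [Real.le_log_iff_exp_le (by norm_num)]
    linarith [Real.exp_one_lt_d9]
  have hq : 0 ≤ p - 1 := by linarith
  have h : Real.exp (p - 1) ≤ (6:ℝ) ^ (p - 1) := by
    rw [Real.rpow_def_of_pos (by norm_num)]
    exact Real.exp_le_exp.2 (le_mul_of_one_le_left hq h6)
  have e : (6:ℝ) ^ p = 6 * 6 ^ (p - 1) := by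
    rw [Real.rpow_sub_one (by norm_num)]; ring
  have := Real.quadratic_le_exp_of_nonneg hq
  rw [e]
  nlinarith

/-- mean inequality (Theorem 4.5, corrected constant), where
`1/H(a,b) = (1/a + 1/b)/2` and `1/L(a,b) = (log b - log a)/(b - a)`. -/
theorem mean_ineq_five (a b p : ℝ)
    (ha : 0 < a) (hab : a < b) (hp : 1 ≤ p) :
    |(1 / a + 1 / b) / 2 - (Real.log b - Real.log a) / (b - a)|
    ≤ (2 * (b - a) ^ 2 / ((2:ℝ) ^ (1 - 1 / p) * ((p + 2) * (p + 3)) ^ (1 / p)))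
        * (1 / a ^ (3 * p) + 2 / ((p + 1) * b ^ (3 * p))) ^ (1 / p) := by
  have hb : 0 < b := ha.trans hab
  have hp0 : 0 < p := by linarith
  refine (abs_inv_harmonic_sub_inv_log_le ha hab).trans ?_
  set S := 1 / a ^ (3 * p) + 2 / ((p + 1) * b ^ (3 * p)) with hS
  have hS0 : 0 ≤ S := by positivity
  -- since `2 / 2 ^ (1 - 1/p) = 2 ^ (1/p)`, all constants go under one `p`-th root
  have e : 2 * (b - a) ^ 2 / ((2:ℝ) ^ (1 - 1 / p) * ((p + 2) * (p + 3)) ^ (1 / p)) * S ^ (1 / p)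
      = (b - a) ^ 2 * (2 / ((p + 2) * (p + 3)) * S) ^ (1 / p) := by
    rw [Real.mul_rpow (by positivity) hS0, Real.div_rpow (by norm_num) (by positivity),
      Real.rpow_sub (by norm_num), Real.rpow_one]
    have : (0:ℝ) < 2 ^ (1 / p) := by positivity
    have : (0:ℝ) < ((p + 2) * (p + 3)) ^ (1 / p) := by positivity
    field_simp
  rw [e]
  refine mul_le_mul_of_nonneg_left ?_ (sq_nonneg _)
  rw [one_div p, Real.le_rpow_inv_iff_of_pos (by positivity) (by positivity) hp0]
  have e2 : (1 / (6 * a ^ 3)) ^ p = 1 / (6:ℝ) ^ p * (1 / a ^ (3 * p)) := by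
    rw [Real.div_rpow (by norm_num) (by positivity), Real.one_rpow,
      Real.mul_rpow (by norm_num) (by positivity), Real.rpow_mul ha.le]
    norm_num
    ring
  rw [e2]
  refine mul_le_mul ?_ (le_add_of_nonneg_right (by positivity)) (by positivity) (by positivity)
  rw [div_le_div_iff₀ (by positivity) (by positivity)]
  linarith [add_two_mul_add_three_le_rpow hp]
end
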